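/- arXiv:1910.02477 — 5 statements merged into one kernel-verified Lean document; each statement's English description precedes it below -/
import Mathlib

section
/- Let e > 0, m > e, u₀ > 0 and v₀ ≥ 0 be real numbers. Then for all real numbers A ≥ 0 and B ≥ 0 one has (e/(u₀²(m−e)²))·(u₀A + (u₀(m−e)+v₀)B)² + (2AB − eB²) ≥ 0. -/
/-!
The only negative term of `D·D` is `-eB²`, the contribution of `BΘ`. Since `A` and `v₀` are
nonnegative, `D·ω₀ ≥ u₀(m - e)B`, and `C_{ω₀}` is the factor for which
`C_{ω₀}(u₀(m - e)B)² = eB²`.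
-/

theorem mul_le_mul_add_add_mul {R : Type*} [Semiring R] [PartialOrder R] [IsOrderedRing R]
    {u v k a b : R} (hu : 0 ≤ u) (hv : 0 ≤ v) (ha : 0 ≤ a) (hb : 0 ≤ b) :
    k * b ≤ u * a + (k + v) * b :=
  calc
    k * b ≤ (k + v) * b := mul_le_mul_of_nonneg_right (le_add_of_nonneg_right hv) hb
    _ ≤ u * a + (k + v) * b := le_add_of_nonneg_left (mul_nonneg hu ha)

theorem mul_sq_le_div_sq_mul_sq {K : Type*} [Semifield K] [LinearOrder K] [IsStrictOrderedRing K]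
    {c k b x : K} (hc : 0 ≤ c) (hk : 0 < k) (hb : 0 ≤ b) (hx : k * b ≤ x) :
    c * b ^ 2 ≤ c / k ^ 2 * x ^ 2 :=
  calc
    c * b ^ 2 = c / k ^ 2 * (k * b) ^ 2 := by field_simp
    _ ≤ c / k ^ 2 * x ^ 2 := by gcongr

theorem bogomolov_constant_general_polarisation_general
    {K : Type*} [Field K] [LinearOrder K] [IsStrictOrderedRing K] {e m u₀ v₀ A B : K}
    (he : 0 ≤ e) (hm : e < m) (hu₀ : 0 < u₀) (hv₀ : 0 ≤ v₀) (hA : 0 ≤ A) (hB : 0 ≤ B) :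
    0 ≤ e / (u₀ ^ 2 * (m - e) ^ 2) * (u₀ * A + (u₀ * (m - e) + v₀) * B) ^ 2
        + (2 * A * B - e * B ^ 2) := by
  have slope_pos : 0 < u₀ * (m - e) := mul_pos hu₀ (sub_pos.mpr hm)
  have degree_ge : u₀ * (m - e) * B ≤ u₀ * A + (u₀ * (m - e) + v₀) * B :=
    mul_le_mul_add_add_mul hu₀.le hv₀ hA hB
  have neg_part_le : e * B ^ 2 ≤
      e / (u₀ ^ 2 * (m - e) ^ 2) * (u₀ * A + (u₀ * (m - e) + v₀) * B) ^ 2 := by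
    rw [← mul_pow]
    exact mul_sq_le_div_sq_mul_sq he slope_pos hB degree_ge
  have cross_nonneg : 0 ≤ 2 * A * B := by positivity
  linarith

/-- Numerical Bogomolov-constant for the polarisation `ω₀ = u₀(Θ+mf) + v₀f` on a
Weierstraß surface of Picard rank two: the constant `C_{ω₀} = e/(u₀²(m−e)²)`
satisfies `C_{ω₀}(D·ω₀)² + D·D ≥ 0` for every effective divisor
`D = A f + B Θ` (`A, B ≥ 0`), where `D·ω₀ = u₀A + (u₀(m−e)+v₀)B` and
`D·D = 2AB − eB²`. -/
theorem bogomolov_constant_general_polarisation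
    (e m u₀ v₀ : ℝ) (he : 0 < e) (hm : e < m) (hu₀ : 0 < u₀) (hv₀ : 0 ≤ v₀) :
    ∀ A B : ℝ, 0 ≤ A → 0 ≤ B →
      0 ≤ e / (u₀ ^ 2 * (m - e) ^ 2) * (u₀ * A + (u₀ * (m - e) + v₀) * B) ^ 2
          + (2 * A * B - e * B ^ 2) :=
  fun _ _ => bogomolov_constant_general_polarisation_general he.le hm hu₀ hv₀
end

section
/- Let N be a real vector space with a symmetric bilinear form written D·D', and Θ, f ∈ N with Θ·Θ = −e, f·f = 0, Θ·f = 1 (e, m real). Let ch(E) = (n, C, s) ∈ ℝ × N × ℝ, d := C·f, c := C·Θ, and define the transformed character ch(ΦE) := (d, D_Φ, −c − de + (1/2)ne) with D_Φ := −C + d·e·f + (d−n)Θ + (c − (1/2)ed + s)f. For u, v > 0 set ω := u(Θ + mf) + vf and Z_ω(ch) := −ch₂ + (ω·ω/2)·ch₀ + i·(ω·ch₁). Then Z_ω(ΦE[1]) := −Z_ω(ch(ΦE)) = (−c + (e/2)n) − ((m − e/2)u² + uv + e)·d + i·( u(−(s − (e/2)d) + (m−e)n) + v n ). Moreover, if α,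 β > 0 and (m − e/2)u² + uv = α + m − e, then setting ω̄ := (β/α)(Θ + mf) + βf and ch₁^B(E) := C − (e/2)n·f (the B-field twist with B = (e/2)f), one has ω̄·ch₁^B(E) = −(β/α)·Re Z_ω(ΦE[1]). -/
/-!
Everything reduces to the intersection numbers `ω·Θ = u(m − e) + v` and `ω·f = u` of a class
`ω = u(Θ + mf) + vf`. The real part of `Z_ω(ΦE[1])` depends on `(u, v)` only through the volume
`ω²/2 = (m − e/2)u² + uv`. Fixing this volume to be `α + m − e` turns the real part into
`−(c − (e/2)n + (α + m)d)`, and the bracket is the twisted degree of `E` with respect to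
`(Θ + mf) + αf`, of which `ω̄` is the multiple by `β/α`.
-/

namespace WeierstrassSurface

/-- The intersection numbers of the section `Θ` and the fiber class `f` of a Weierstraß elliptic
surface with `e = −Θ²`, for a symmetric intersection pairing `B`. -/
structure IsSectionFiber {K N : Type*} [CommRing K] [AddCommGroup N] [Module K N]
    (B : N →ₗ[K] N →ₗ[K] K) (e : K) (Θ f : N) : Prop where
  symm : ∀ D D' : N, B D D' = B D' D
  section_section : B Θ Θ = -e
  fiber_fiber : B f f = 0
  section_fiber : B Θ f = 1

/-- The divisor class `u(Θ + mf) + vf`, the shape of the polarizations `ω` and `ω̄`. -/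
def polarization {K N : Type*} [CommRing K] [AddCommGroup N] [Module K N]
    (Θ f : N) (m u v : K) : N :=
  u • (Θ + m • f) + v • f

/-- A Chern character on a surface, with first component in a space `N` of divisor classes and
the degree-four component identified with a scalar. -/
structure ChernCharacter (K N : Type*) where
  ch₀ : K
  ch₁ : N
  ch₂ : K

/-- The first component of the Chern character twisted by the B-field `D`, that is, of
`exp(−D) · ch`. -/
def ChernCharacter.twistedCh₁ {K N : Type*} [CommRing K] [AddCommGroup N] [Module K N]
    (E : ChernCharacter K N) (D : N) : N :=
  E.ch₁ - E.ch₀ • D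

/-- The cohomological Fourier–Mukai transform on a Weierstraß elliptic surface with section `Θ`,
fiber class `f` and `e = −Θ²`; the fiber degree `d` and the section degree `c` of the paper are
`B E.ch₁ f` and `B E.ch₁ Θ`. -/
def fourierMukai {K N : Type*} [Field K] [AddCommGroup N] [Module K N]
    (B : N →ₗ[K] N →ₗ[K] K) (e : K) (Θ f : N) (E : ChernCharacter K N) : ChernCharacter K N where
  ch₀ := B E.ch₁ f
  ch₁ := -E.ch₁ + (B E.ch₁ f * e) • f + (B E.ch₁ f - E.ch₀) • Θ
    + (B E.ch₁ Θ - (1 / 2) * e * B E.ch₁ f + E.ch₂) • f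
  ch₂ := -B E.ch₁ Θ - B E.ch₁ f * e + (1 / 2) * E.ch₀ * e

/-- The central charge `Z_ω = −ch₂ + (ω²/2) ch₀ + i ω·ch₁` of the Bridgeland stability condition
attached to `ω` and zero B-field. -/
noncomputable def centralCharge {N : Type*} [AddCommGroup N] [Module ℝ N]
    (B : N →ₗ[ℝ] N →ₗ[ℝ] ℝ) (ω : N) (E : ChernCharacter ℝ N) : ℂ :=
  ((-E.ch₂ + B ω ω / 2 * E.ch₀ : ℝ) : ℂ) + ((B ω E.ch₁ : ℝ) : ℂ) * Complex.I

theorem pairing_polarization {K N : Type*} [CommRing K] [AddCommGroup N] [Module K N]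
    (B : N →ₗ[K] N →ₗ[K] K) (Θ f : N) (m u v : K) (D : N) :
    B D (polarization Θ f m u v) = u * (B D Θ + m * B D f) + v * B D f := by
  simp only [polarization, map_add, map_smul, smul_eq_mul]

section CentralCharge

variable {N : Type*} [AddCommGroup N] [Module ℝ N]
  (B : N →ₗ[ℝ] N →ₗ[ℝ] ℝ) (ω : N) (E : ChernCharacter ℝ N)

theorem centralCharge_re : (centralCharge B ω E).re = -E.ch₂ + B ω ω / 2 * E.ch₀ := by
  simp [centralCharge]

theorem centralCharge_im : (centralCharge B ω E).im = B ω E.ch₁ := by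
  simp [centralCharge]

end CentralCharge

namespace IsSectionFiber

section CommRing

variable {K N : Type*} [CommRing K] [AddCommGroup N] [Module K N]
  {B : N →ₗ[K] N →ₗ[K] K} {e : K} {Θ f : N}

theorem polarization_section (h : IsSectionFiber B e Θ f) (m u v : K) :
    B (polarization Θ f m u v) Θ = u * (m - e) + v := by
  rw [h.symm, pairing_polarization, h.section_section, h.section_fiber]
  ring

theorem polarization_fiber (h : IsSectionFiber B e Θ f) (m u v : K) :
    B (polarization Θ f m u v) f = u := by
  rw [h.symm, pairing_polarization, h.symm f Θ, h.section_fiber, h.fiber_fiber]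
  ring

theorem polarization_self (h : IsSectionFiber B e Θ f) (m u v : K) :
    B (polarization Θ f m u v) (polarization Θ f m u v) = (2 * m - e) * u ^ 2 + 2 * u * v := by
  rw [pairing_polarization, h.polarization_section, h.polarization_fiber]
  ring

theorem polarization_twistedCh₁_fiber (h : IsSectionFiber B e Θ f) (m u v b : K)
    (E : ChernCharacter K N) :
    B (polarization Θ f m u v) (E.twistedCh₁ (b • f))
      = u * (B E.ch₁ Θ - b * E.ch₀ + m * B E.ch₁ f) + v * B E.ch₁ f := by
  rw [ChernCharacter.twistedCh₁, map_sub, map_smul, map_smul, h.polarization_fiber,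
    h.symm _ E.ch₁, pairing_polarization, smul_eq_mul, smul_eq_mul]
  ring

end CommRing

theorem polarization_fourierMukai_ch₁ {K N : Type*} [Field K] [AddCommGroup N] [Module K N]
    {B : N →ₗ[K] N →ₗ[K] K} {e : K} {Θ f : N} (h : IsSectionFiber B e Θ f) (m u v : K)
    (E : ChernCharacter K N) :
    B (polarization Θ f m u v) (fourierMukai B e Θ f E).ch₁
      = -(u * (-(E.ch₂ - e / 2 * B E.ch₁ f) + (m - e) * E.ch₀) + v * E.ch₀) := by
  simp only [fourierMukai, map_add, map_neg, map_smul, smul_eq_mul, h.polarization_section,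
    h.polarization_fiber]
  rw [h.symm _ E.ch₁, pairing_polarization]
  ring

section Real

variable {N : Type*} [AddCommGroup N] [Module ℝ N]
  {B : N →ₗ[ℝ] N →ₗ[ℝ] ℝ} {e : ℝ} {Θ f : N}

theorem neg_centralCharge_fourierMukai_re (h : IsSectionFiber B e Θ f) (m u v : ℝ)
    (E : ChernCharacter ℝ N) :
    (-centralCharge B (polarization Θ f m u v) (fourierMukai B e Θ f E)).re
      = (-B E.ch₁ Θ + e / 2 * E.ch₀) - ((m - e / 2) * u ^ 2 + u * v + e) * B E.ch₁ f := by
  rw [Complex.neg_re, centralCharge_re, h.polarization_self, fourierMukai]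
  ring

theorem neg_centralCharge_fourierMukai_im (h : IsSectionFiber B e Θ f) (m u v : ℝ)
    (E : ChernCharacter ℝ N) :
    (-centralCharge B (polarization Θ f m u v) (fourierMukai B e Θ f E)).im
      = u * (-(E.ch₂ - e / 2 * B E.ch₁ f) + (m - e) * E.ch₀) + v * E.ch₀ := by
  rw [Complex.neg_im, centralCharge_im, h.polarization_fourierMukai_ch₁, neg_neg]

theorem polarization_twistedCh₁_eq_neg_mul_re (h : IsSectionFiber B e Θ f) {m u v α : ℝ} (β : ℝ)
    (hα : α ≠ 0) (hvol : (m - e / 2) * u ^ 2 + u * v = α + m - e) (E : ChernCharacter ℝ N) :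
    B (polarization Θ f m (β / α) β) (E.twistedCh₁ ((e / 2) • f))
      = -(β / α)
        * (-centralCharge B (polarization Θ f m u v) (fourierMukai B e Θ f E)).re := by
  have hβ : β = β / α * α := (div_mul_cancel₀ β hα).symm
  calc B (polarization Θ f m (β / α) β) (E.twistedCh₁ ((e / 2) • f))
      = β / α * (B E.ch₁ Θ - e / 2 * E.ch₀ + m * B E.ch₁ f) + β * B E.ch₁ f :=
        h.polarization_twistedCh₁_fiber m (β / α) β (e / 2) E
    _ = β / α * (B E.ch₁ Θ - e / 2 * E.ch₀ + (α + m) * B E.ch₁ f) := by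
        linear_combination B E.ch₁ f * hβ
    _ = -(β / α)
        * (-centralCharge B (polarization Θ f m u v) (fourierMukai B e Θ f E)).re := by
        rw [h.neg_centralCharge_fourierMukai_re, hvol]
        ring

end Real

end IsSectionFiber

end WeierstrassSurface

open WeierstrassSurface

/-- The central charge of the shifted Fourier–Mukai transform on a Weierstraß
elliptic surface: with `ch(E) = (n, C, s)`, `d = C·f`, `c = C·Θ`,
`ch(ΦE) = (d, D_Φ, −c − de + ne/2)`, `ω = u(Θ+mf) + vf` and
`Z_ω = −ch₂ + (ω²/2)ch₀ + i ω·ch₁`, one has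
`Z_ω(ΦE[1]) = −Z_ω(ch(ΦE)) = (−c + (e/2)n) − ((m−e/2)u² + uv + e)d
+ i(u(−(s − (e/2)d) + (m−e)n) + vn)`; moreover on the volume section
`(m−e/2)u² + uv = α + m − e` (with `α, β > 0`), for `ω̄ = (β/α)(Θ+mf) + βf`
and the B-field twist `ch₁^B(E) = C − (e/2)n·f` one has
`ω̄·ch₁^B(E) = −(β/α)·Re Z_ω(ΦE[1])`. -/
theorem fourier_mukai_central_charge
    {N : Type*} [AddCommGroup N] [Module ℝ N]
    (B : N →ₗ[ℝ] N →ₗ[ℝ] ℝ) (hsymm : ∀ D D' : N, B D D' = B D' D)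
    (e m : ℝ) (Θ f : N)
    (hΘΘ : B Θ Θ = -e) (hff : B f f = 0) (hΘf : B Θ f = 1)
    (n s : ℝ) (C : N) (d c : ℝ) (hd : d = B C f) (hc : c = B C Θ)
    (u v : ℝ) (hu : 0 < u) (hv : 0 < v)
    (ω : N) (hω : ω = u • (Θ + m • f) + v • f)
    (DΦ : N)
    (hDΦ : DΦ = -C + (d * e) • f + (d - n) • Θ + (c - (1 / 2) * e * d + s) • f)
    (Z : ℂ)
    (hZ : Z = -((((-(-c - d * e + (1 / 2) * n * e) + B ω ω / 2 * d : ℝ) : ℂ))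
        + ((B ω DΦ : ℝ) : ℂ) * Complex.I)) :
    Z = (((-c + e / 2 * n) - ((m - e / 2) * u ^ 2 + u * v + e) * d : ℝ) : ℂ)
        + (((u * (-(s - e / 2 * d) + (m - e) * n) + v * n : ℝ)) : ℂ) * Complex.I
    ∧ ∀ α β : ℝ, 0 < α → 0 < β →
        (m - e / 2) * u ^ 2 + u * v = α + m - e →
        B ((β / α) • (Θ + m • f) + β • f) (C - (e / 2 * n) • f)
          = -(β / α) * Z.re := by
  subst hd hc hω hDΦ
  have h : IsSectionFiber B e Θ f := ⟨hsymm, hΘΘ, hff, hΘf⟩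
  let E : ChernCharacter ℝ N := ⟨n, C, s⟩
  have hZE : Z = -centralCharge B (polarization Θ f m u v) (fourierMukai B e Θ f E) := hZ
  refine ⟨?_, fun α β hα _ hvol => ?_⟩
  · rw [← h.neg_centralCharge_fourierMukai_re m u v E,
      ← h.neg_centralCharge_fourierMukai_im m u v E, ← hZE]
    exact (Complex.re_add_im Z).symm
  · rw [hZE, ← h.polarization_twistedCh₁_eq_neg_mul_re β hα.ne' hvol,
      ChernCharacter.twistedCh₁, smul_smul, mul_comm n]
    rfl
end

section
/- (Potential walls for two-dimensional objects, case B.) Assume k + Σ_i ξ_i = 0 and ρ := p − ek + Σ_i ξ_i θ_i ≠ 0. Define A := −( (xχ − rz)/x + Δ'·Δ_L + (a_L + Σ_i η_i)(p − (e/2)k + Σ_i ξ_i(θ_i + e/2)) )·(a_L + Σ_i η_i)/ρ and B := z/x + (Δ_L·Δ_L)/2 − ( b_L − e·a_L + (e/2)(a_L + Σ_i η_i) + Σ_i η_i θ_i )·( (xχ − rz)/x + Δ'·Δ_L )/ρ. Then there exists λ₀ ∈ (0,1) such that for each λ ∈ (0,λ₀) there is a unique real number Q(λ) with (λ, Q(λ))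 on the potential wall W(e^L ch, e^L ch'); moreover 2λ²·Q(λ) → A as λ → 0⁺; if A = 0 then 2λ·Q(λ) → B as λ → 0⁺; and if A = B = 0 then Q(λ) remains bounded as λ → 0⁺. -/
open Set Filter

/-!
Replacing the section `Θ` by `σ = Θ + (e/2)f` turns `(Θ, f)` into a hyperbolic pair:
`σ² = f² = 0`, `σ·f = 1`. In these terms `H_λ = λσ + (1 + κλ)f` with `κ = m - e/2 - 1`, and `Δ_L`,
`Δ'` are the components of `L` and `ch'₁` orthogonal to `σ` and `f`. The wall equation is affine in
`q`; when `ch'₁·f = 0` it divides out to the exact formula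
`Q(λ) = A / (2λ²) + B / (2λ(1 + κλ))`, from which the asymptotics can be read off.
-/

open scoped Topology

section HyperbolicPair

variable {R N : Type*} [CommRing R] [AddCommGroup N] [Module R N]

/-- Two isotropic vectors with pairing one, spanning a hyperbolic plane. Meant for symmetric forms,
which is why only one of the two mixed pairings is recorded. -/
structure IsHyperbolicPair (B : LinearMap.BilinForm R N) (σ f : N) : Prop where
  left_self : B σ σ = 0
  right_self : B f f = 0
  left_right : B σ f = 1

/-- The component of a vector orthogonal to the plane spanned by `σ` and `f`, as a linear map; it is
the orthogonal projection when `(σ, f)` is a hyperbolic pair for a symmetric form. -/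
def orthogonalPart (B : LinearMap.BilinForm R N) (σ f : N) : N →ₗ[R] N :=
  LinearMap.id - (B.flip f).smulRight σ - (B.flip σ).smulRight f

/-- The ray of classes `λσ + (1 + κλ)f`. With `σ = Θ + (e/2)f` and `κ = m - e/2 - 1` it is the
ray `H_λ = λ(Θ + mf) + (1 - λ)f` of polarizations. -/
def polarizationRay (σ f : N) (κ l : R) : N :=
  l • σ + (1 + κ * l) • f

variable {B : LinearMap.BilinForm R N} {σ f : N}

theorem orthogonalPart_apply (D : N) :
    orthogonalPart B σ f D = D - B D f • σ - B D σ • f := rfl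

theorem apply_polarizationRay (D : N) (κ l : R) :
    B D (polarizationRay σ f κ l) = l * B D σ + (1 + κ * l) * B D f := by
  simp [polarizationRay]

namespace IsHyperbolicPair

theorem right_left (h : IsHyperbolicPair B σ f) (hB : B.IsSymm) : B f σ = 1 :=
  (hB.eq f σ).trans h.left_right

theorem orthogonalPart_left (h : IsHyperbolicPair B σ f) : orthogonalPart B σ f σ = 0 := by
  simp [orthogonalPart_apply, h.left_self, h.left_right]

theorem orthogonalPart_right (h : IsHyperbolicPair B σ f) (hB : B.IsSymm) :
    orthogonalPart B σ f f = 0 := by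
  simp [orthogonalPart_apply, h.right_self, h.right_left hB]

theorem apply_eq_apply_orthogonalPart_add (h : IsHyperbolicPair B σ f) (hB : B.IsSymm) (D E : N) :
    B D E = B (orthogonalPart B σ f D) (orthogonalPart B σ f E)
      + B D f * B E σ + B D σ * B E f := by
  simp only [orthogonalPart_apply, map_sub, map_smul, LinearMap.sub_apply, LinearMap.smul_apply,
    smul_eq_mul, h.left_self, h.right_self, h.left_right, h.right_left hB, hB.eq σ E, hB.eq f E]
  ring

theorem polarizationRay_self (h : IsHyperbolicPair B σ f) (hB : B.IsSymm) (κ l : R) :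
    B (polarizationRay σ f κ l) (polarizationRay σ f κ l) = 2 * l * (1 + κ * l) := by
  simp only [polarizationRay, map_add, map_smul, LinearMap.add_apply, LinearMap.smul_apply,
    smul_eq_mul, h.left_self, h.right_self, h.left_right, h.right_left hB]
  ring

end IsHyperbolicPair

end HyperbolicPair

section SectionFamily

variable {K N ι : Type*} [Field K] [AddCommGroup N] [Module K N]

/-- The numerical data of a zero section `Θ`, a fibre `f` and further sections `Θi` on a
Weierstraß elliptic surface: `Θ² = -e`, and `θ i` is the intersection number of `Θ` and `Θi i`. -/
structure IsSectionFamily (B : LinearMap.BilinForm K N) (e : K) (Θ f : N) (Θi : ι → N)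
    (θ : ι → K) : Prop where
  isSymm : B.IsSymm
  zeroSection_self : B Θ Θ = -e
  fibre_self : B f f = 0
  zeroSection_fibre : B Θ f = 1
  section_fibre : ∀ i, B (Θi i) f = 1
  eq_zeroSection_section : ∀ i, θ i = B Θ (Θi i)

theorem polarizationRay_add_half_smul (Θ f : N) (e m l : K) :
    polarizationRay (Θ + (e / 2) • f) f (m - e / 2 - 1) l = l • (Θ + m • f) + (1 - l) • f := by
  rw [polarizationRay]
  module

namespace IsSectionFamily

variable {B : LinearMap.BilinForm K N} {e : K} {Θ f : N} {Θi : ι → N} {θ : ι → K}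

theorem section_zeroSection (h : IsSectionFamily B e Θ f Θi θ) (i : ι) : B (Θi i) Θ = θ i := by
  rw [h.isSymm.eq, h.eq_zeroSection_section]

theorem isHyperbolicPair [NeZero (2 : K)] (h : IsSectionFamily B e Θ f Θi θ) :
    IsHyperbolicPair B (Θ + (e / 2) • f) f where
  left_self := by
    simp only [map_add, map_smul, LinearMap.add_apply, LinearMap.smul_apply, smul_eq_mul,
      h.zeroSection_self, h.fibre_self, h.zeroSection_fibre, h.isSymm.eq f Θ]
    linear_combination add_halves e
  right_self := h.fibre_self
  left_right := by simp [h.zeroSection_fibre, h.fibre_self]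

theorem orthogonalPart_section [NeZero (2 : K)] (h : IsSectionFamily B e Θ f Θi θ) (i : ι) :
    orthogonalPart B (Θ + (e / 2) • f) f (Θi i) = Θi i - Θ - (θ i + e) • f := by
  have hσ : B (Θi i) (Θ + (e / 2) • f) = θ i + e / 2 := by
    simp [h.section_fibre, h.section_zeroSection]
  rw [orthogonalPart_apply, h.section_fibre, hσ]
  linear_combination (norm := module) -(add_halves e) • f

variable [Fintype ι]

theorem orthogonalPart_combination [NeZero (2 : K)] (h : IsSectionFamily B e Θ f Θi θ) (a b : K)
    (c : ι → K) :
    orthogonalPart B (Θ + (e / 2) • f) f (a • Θ + b • f + ∑ i, c i • Θi i)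
      = ∑ i, c i • (Θi i - Θ - (θ i + e) • f) := by
  have hf := h.isHyperbolicPair.orthogonalPart_right h.isSymm
  have hΘ : orthogonalPart B (Θ + (e / 2) • f) f Θ = 0 := by
    simpa [hf] using h.isHyperbolicPair.orthogonalPart_left
  simp [hf, hΘ, h.orthogonalPart_section]

theorem combination_fibre (h : IsSectionFamily B e Θ f Θi θ) (a b : K) (c : ι → K) :
    B (a • Θ + b • f + ∑ i, c i • Θi i) f = a + ∑ i, c i := by
  simp [h.fibre_self, h.zeroSection_fibre, h.section_fibre]

theorem combination_zeroSection (h : IsSectionFamily B e Θ f Θi θ) (a b : K) (c : ι → K) :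
    B (a • Θ + b • f + ∑ i, c i • Θi i) Θ = b - e * a + ∑ i, c i * θ i := by
  simp only [map_add, map_smul, map_sum, LinearMap.add_apply, LinearMap.smul_apply,
    LinearMap.sum_apply, smul_eq_mul, h.zeroSection_self, h.isSymm.eq f Θ, h.zeroSection_fibre,
    h.section_zeroSection]
  ring

theorem combination_add_half_smul (h : IsSectionFamily B e Θ f Θi θ) (a b : K) (c : ι → K) :
    B (a • Θ + b • f + ∑ i, c i • Θi i) (Θ + (e / 2) • f)
      = b - e * a + e / 2 * (a + ∑ i, c i) + ∑ i, c i * θ i := by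
  rw [map_add, map_smul, smul_eq_mul, h.combination_zeroSection, h.combination_fibre]
  ring

theorem combination_add_half_smul_of_add_sum_eq_zero (h : IsSectionFamily B e Θ f Θi θ) {k : K}
    {ξ : ι → K} (hk : k + ∑ i, ξ i = 0) (p : K) :
    B (k • Θ + p • f + ∑ i, ξ i • Θi i) (Θ + (e / 2) • f) = p - e * k + ∑ i, ξ i * θ i := by
  rw [h.combination_add_half_smul, hk, mul_zero, add_zero]

end IsSectionFamily

end SectionFamily

section PotentialWall

variable {N : Type*} [AddCommGroup N] [Module ℝ N]

/-- A numerical Chern character `(ch₀, ch₁, ch₂)` on a surface with Néron–Severi space `N`. -/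
structure ChernCharacter (N : Type*) where
  ch₀ : ℝ
  ch₁ : N
  ch₂ : ℝ

namespace ChernCharacter

/-- The product `e^L · v`, i.e. the effect on Chern characters of tensoring with a line bundle of
class `L`. -/
noncomputable def twist (B : LinearMap.BilinForm ℝ N) (L : N) (v : ChernCharacter N) :
    ChernCharacter N where
  ch₀ := v.ch₀
  ch₁ := v.ch₁ + v.ch₀ • L
  ch₂ := v.ch₂ + B L v.ch₁ + v.ch₀ / 2 * B L L

/-- The central charge of `v` for the polarization `H` and the parameter `q`, at vanishing
B-field. -/
def centralCharge (B : LinearMap.BilinForm ℝ N) (H : N) (q : ℝ) (v : ChernCharacter N) : ℂ where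
  re := -v.ch₂ + v.ch₀ * B H H * q
  im := B v.ch₁ H

end ChernCharacter

/-- The pair `(H, q)` lies on the potential wall `W(v, w)`: the central charges of `v` and `w` are
linearly dependent over `ℝ`. -/
def OnPotentialWall (B : LinearMap.BilinForm ℝ N) (H : N) (q : ℝ) (v w : ChernCharacter N) :
    Prop :=
  (v.centralCharge B H q).re * (w.centralCharge B H q).im
    = (w.centralCharge B H q).re * (v.centralCharge B H q).im

/-- The coefficient of `1 / (2λ²)` in the equation of the wall `W(e^L v, e^L w)` along a
polarization ray. Meaningful for `v.ch₀ ≠ 0` and `w.ch₁·σ ≠ 0`. -/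
noncomputable def wallLeadingCoeff (B : LinearMap.BilinForm ℝ N) (σ f L : N)
    (v w : ChernCharacter N) : ℝ :=
  -((v.ch₀ * w.ch₂ - w.ch₀ * v.ch₂) / v.ch₀
      + B (orthogonalPart B σ f w.ch₁) (orthogonalPart B σ f L) + B L f * B w.ch₁ σ)
    * B L f / B w.ch₁ σ

/-- The coefficient of `1 / (2λ(1 + κλ))` in the equation of the wall `W(e^L v, e^L w)` along a
polarization ray. Meaningful for `v.ch₀ ≠ 0` and `w.ch₁·σ ≠ 0`. -/
noncomputable def wallSubleadingCoeff (B : LinearMap.BilinForm ℝ N) (σ f L : N)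
    (v w : ChernCharacter N) : ℝ :=
  v.ch₂ / v.ch₀ + B (orthogonalPart B σ f L) (orthogonalPart B σ f L) / 2
    - B L σ * ((v.ch₀ * w.ch₂ - w.ch₀ * v.ch₂) / v.ch₀
        + B (orthogonalPart B σ f w.ch₁) (orthogonalPart B σ f L)) / B w.ch₁ σ

namespace IsSectionFamily

variable {ι : Type*} [Fintype ι] {B : LinearMap.BilinForm ℝ N} {e : ℝ} {Θ f : N} {Θi : ι → N}
  {θ : ι → ℝ} {k : ℝ} {ξ : ι → ℝ}

theorem wallLeadingCoeff_combination (h : IsSectionFamily B e Θ f Θi θ) (hk : k + ∑ i, ξ i = 0)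
    (a b r p χ : ℝ) (η : ι → ℝ) (v : ChernCharacter N) :
    wallLeadingCoeff B (Θ + (e / 2) • f) f (a • Θ + b • f + ∑ i, η i • Θi i) v
        ⟨r, k • Θ + p • f + ∑ i, ξ i • Θi i, χ⟩
      = -((v.ch₀ * χ - r * v.ch₂) / v.ch₀
          + B (∑ i, ξ i • (Θi i - Θ - (θ i + e) • f)) (∑ i, η i • (Θi i - Θ - (θ i + e) • f))
          + (a + ∑ i, η i) * (p - e / 2 * k + ∑ i, ξ i * (θ i + e / 2)))
        * (a + ∑ i, η i) / (p - e * k + ∑ i, ξ i * θ i) := by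
  have hρ : p - e / 2 * k + ∑ i, ξ i * (θ i + e / 2) = p - e * k + ∑ i, ξ i * θ i := by
    simp only [mul_add, Finset.sum_add_distrib, ← Finset.sum_mul]
    linear_combination e / 2 * hk
  rw [wallLeadingCoeff, h.orthogonalPart_combination, h.orthogonalPart_combination,
    h.combination_fibre, h.combination_add_half_smul_of_add_sum_eq_zero hk, hρ]

theorem wallSubleadingCoeff_combination (h : IsSectionFamily B e Θ f Θi θ)
    (hk : k + ∑ i, ξ i = 0) (a b r p χ : ℝ) (η : ι → ℝ) (v : ChernCharacter N) :
    wallSubleadingCoeff B (Θ + (e / 2) • f) f (a • Θ + b • f + ∑ i, η i • Θi i) v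
        ⟨r, k • Θ + p • f + ∑ i, ξ i • Θi i, χ⟩
      = v.ch₂ / v.ch₀
        + B (∑ i, η i • (Θi i - Θ - (θ i + e) • f)) (∑ i, η i • (Θi i - Θ - (θ i + e) • f)) / 2
        - (b - e * a + e / 2 * (a + ∑ i, η i) + ∑ i, η i * θ i)
          * ((v.ch₀ * χ - r * v.ch₂) / v.ch₀
            + B (∑ i, ξ i • (Θi i - Θ - (θ i + e) • f)) (∑ i, η i • (Θi i - Θ - (θ i + e) • f)))
          / (p - e * k + ∑ i, ξ i * θ i) := by
  rw [wallSubleadingCoeff, h.orthogonalPart_combination, h.orthogonalPart_combination,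
    h.combination_add_half_smul, h.combination_add_half_smul_of_add_sum_eq_zero hk]

end IsSectionFamily

/-- The function `λ ↦ a / (2λ²) + b / (2λ(1 + κλ))`, whose graph is the potential wall when `a` and
`b` are its leading and subleading coefficients. -/
noncomputable def wallFunction (κ a b l : ℝ) : ℝ :=
  a / (2 * l ^ 2) + b / (2 * l * (1 + κ * l))

variable {B : LinearMap.BilinForm ℝ N} {σ f : N} {v w : ChernCharacter N}

theorem onPotentialWall_twist_iff (hv : v.ch₁ = 0) (L H : N) (q : ℝ) :
    OnPotentialWall B H q (v.twist B L) (w.twist B L) ↔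
      v.ch₀ * B w.ch₁ H * (B H H * q) = (v.ch₂ + v.ch₀ / 2 * B L L) * B w.ch₁ H
        - (v.ch₀ * w.ch₂ - w.ch₀ * v.ch₂ + v.ch₀ * B L w.ch₁) * B L H := by
  simp only [OnPotentialWall, ChernCharacter.centralCharge, ChernCharacter.twist, hv, map_zero,
    map_add, map_smul, LinearMap.add_apply, LinearMap.smul_apply, LinearMap.zero_apply,
    smul_eq_mul]
  constructor <;> intro h <;> linear_combination h

theorem mul_wallLeadingCoeff (hB : B.IsSymm) (h : IsHyperbolicPair B σ f) (hv₀ : v.ch₀ ≠ 0)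
    (hwf : B w.ch₁ f = 0) (hwσ : B w.ch₁ σ ≠ 0) (L : N) :
    v.ch₀ * B w.ch₁ σ * wallLeadingCoeff B σ f L v w
      = -(v.ch₀ * w.ch₂ - w.ch₀ * v.ch₂ + v.ch₀ * B L w.ch₁) * B L f := by
  rw [wallLeadingCoeff, hB.eq L w.ch₁, h.apply_eq_apply_orthogonalPart_add hB w.ch₁ L, hwf]
  field_simp
  ring

theorem mul_wallSubleadingCoeff (hB : B.IsSymm) (h : IsHyperbolicPair B σ f) (hv₀ : v.ch₀ ≠ 0)
    (hwf : B w.ch₁ f = 0) (hwσ : B w.ch₁ σ ≠ 0) (L : N) :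
    v.ch₀ * B w.ch₁ σ * wallSubleadingCoeff B σ f L v w
      = (v.ch₂ + v.ch₀ / 2 * B L L) * B w.ch₁ σ
        - (v.ch₀ * w.ch₂ - w.ch₀ * v.ch₂ + v.ch₀ * B L w.ch₁) * B L σ := by
  rw [wallSubleadingCoeff, hB.eq L w.ch₁, h.apply_eq_apply_orthogonalPart_add hB w.ch₁ L,
    h.apply_eq_apply_orthogonalPart_add hB L L, hwf]
  field_simp
  ring

theorem eq_wallFunction_iff {κ l : ℝ} (hl : l ≠ 0) (hκl : 1 + κ * l ≠ 0) (a b q : ℝ) :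
    q = wallFunction κ a b l ↔ l * (2 * l * (1 + κ * l) * q) = (1 + κ * l) * a + l * b := by
  rw [wallFunction]
  generalize 1 + κ * l = u at *
  field_simp

theorem onPotentialWall_twist_polarizationRay_iff (hB : B.IsSymm) (h : IsHyperbolicPair B σ f)
    (hv₀ : v.ch₀ ≠ 0) (hv₁ : v.ch₁ = 0) (hwf : B w.ch₁ f = 0) (hwσ : B w.ch₁ σ ≠ 0) (L : N)
    {κ l : ℝ} (hl : l ≠ 0) (hκl : 1 + κ * l ≠ 0) (q : ℝ) :
    OnPotentialWall B (polarizationRay σ f κ l) q (v.twist B L) (w.twist B L) ↔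
      q = wallFunction κ (wallLeadingCoeff B σ f L v w) (wallSubleadingCoeff B σ f L v w) l := by
  have hlead := mul_wallLeadingCoeff hB h hv₀ hwf hwσ L
  have hsub := mul_wallSubleadingCoeff hB h hv₀ hwf hwσ L
  rw [onPotentialWall_twist_iff hv₁, h.polarizationRay_self hB, apply_polarizationRay,
    apply_polarizationRay, hwf, eq_wallFunction_iff hl hκl]
  refine Iff.trans ?_ (mul_right_inj' (mul_ne_zero hv₀ hwσ))
  constructor <;> intro hwall
  · linear_combination hwall - (1 + κ * l) * hlead - l * hsub
  · linear_combination hwall + (1 + κ * l) * hlead + l * hsub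

theorem tendsto_two_mul_sq_mul_wallFunction (κ a b : ℝ) :
    Tendsto (fun l => 2 * l ^ 2 * wallFunction κ a b l) (𝓝[≠] 0) (𝓝 a) := by
  have hlim : ContinuousAt (fun l : ℝ => a + l * b / (1 + κ * l)) 0 := by
    fun_prop (disch := simp)
  have hlim' := hlim.tendsto.mono_left (nhdsWithin_le_nhds (s := {0}ᶜ))
  rw [zero_mul, zero_div, add_zero] at hlim'
  refine hlim'.congr' ?_
  filter_upwards [self_mem_nhdsWithin] with l hl
  rw [wallFunction]
  field_simp [show l ≠ 0 from hl]

theorem tendsto_two_mul_mul_wallFunction_zero (κ b : ℝ) :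
    Tendsto (fun l => 2 * l * wallFunction κ 0 b l) (𝓝[≠] 0) (𝓝 b) := by
  have hlim : ContinuousAt (fun l : ℝ => b / (1 + κ * l)) 0 := by
    fun_prop (disch := simp)
  have hlim' := hlim.tendsto.mono_left (nhdsWithin_le_nhds (s := {0}ᶜ))
  rw [mul_zero, add_zero, div_one] at hlim'
  refine hlim'.congr' ?_
  filter_upwards [self_mem_nhdsWithin] with l hl
  rw [wallFunction]
  field_simp [show l ≠ 0 from hl]
  simp

theorem wallFunction_zero_zero (κ l : ℝ) : wallFunction κ 0 0 l = 0 := by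
  simp [wallFunction]

theorem exists_Ioo_one_add_mul_ne_zero (κ : ℝ) :
    ∃ l₀ ∈ Ioo (0 : ℝ) 1, ∀ l ∈ Ioo 0 l₀, 1 + κ * l ≠ 0 := by
  have hcont : ContinuousAt (fun l : ℝ => 1 + κ * l) 0 := by fun_prop
  have hev : ∀ᶠ l in 𝓝[>] (0 : ℝ), 1 + κ * l ≠ 0 :=
    (hcont.eventually_ne (by simp)).filter_mono nhdsWithin_le_nhds
  obtain ⟨l₀, hl₀, hsub⟩ :=
    (mem_nhdsGT_iff_exists_mem_Ioc_Ioo_subset (one_half_pos (α := ℝ))).1 hev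
  exact ⟨l₀, ⟨hl₀.1, hl₀.2.trans_lt one_half_lt_one⟩, hsub⟩

theorem potential_wall_asymptotics_dim_two_caseB_general (hB : B.IsSymm)
    (h : IsHyperbolicPair B σ f) (κ : ℝ) (L : N) (hv₀ : v.ch₀ ≠ 0) (hv₁ : v.ch₁ = 0)
    (hwf : B w.ch₁ f = 0) (hwσ : B w.ch₁ σ ≠ 0) :
    ∃ l₀ ∈ Ioo (0 : ℝ) 1, ∃ Q : ℝ → ℝ,
      (∀ l ∈ Ioo (0 : ℝ) l₀,
        OnPotentialWall B (polarizationRay σ f κ l) (Q l) (v.twist B L) (w.twist B L) ∧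
        ∀ q, OnPotentialWall B (polarizationRay σ f κ l) q (v.twist B L) (w.twist B L) →
          q = Q l) ∧
      Tendsto (fun l => 2 * l ^ 2 * Q l) (𝓝[Ioo 0 l₀] 0) (𝓝 (wallLeadingCoeff B σ f L v w)) ∧
      (wallLeadingCoeff B σ f L v w = 0 →
        Tendsto (fun l => 2 * l * Q l) (𝓝[Ioo 0 l₀] 0)
          (𝓝 (wallSubleadingCoeff B σ f L v w))) ∧
      (wallLeadingCoeff B σ f L v w = 0 → wallSubleadingCoeff B σ f L v w = 0 →
        ∃ M : ℝ, ∀ l ∈ Ioo (0 : ℝ) l₀, |Q l| ≤ M) := by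
  obtain ⟨l₀, hl₀, hκ⟩ := exists_Ioo_one_add_mul_ne_zero κ
  have hnhds : 𝓝[Ioo 0 l₀] (0 : ℝ) ≤ 𝓝[≠] 0 := nhdsWithin_mono 0 fun l hl => hl.1.ne'
  have hwall (l : ℝ) (hl : l ∈ Ioo 0 l₀) := onPotentialWall_twist_polarizationRay_iff
    hB h hv₀ hv₁ hwf hwσ L hl.1.ne' (hκ l hl)
  refine ⟨l₀, hl₀, wallFunction κ _ _,
    fun l hl => ⟨(hwall l hl _).2 rfl, fun q => (hwall l hl q).1⟩,
    (tendsto_two_mul_sq_mul_wallFunction κ _ _).mono_left hnhds, fun hA => ?_, fun hA hBc => ?_⟩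
  · rw [hA]
    exact (tendsto_two_mul_mul_wallFunction_zero κ _).mono_left hnhds
  · exact ⟨0, fun l _ => by rw [hA, hBc, wallFunction_zero_zero, abs_zero]⟩

end PotentialWall

/-- Potential walls in the `(λ,0,0,q)`-plane for two-dimensional objects,
case (B): `ch = (x, 0, z)` with `x ≠ 0`, `xz ≤ 0`,
`ch' = (r, kΘ + pf + Σᵢ ξᵢΘᵢ, χ)` with `k + Σᵢ ξᵢ = 0` and
`ρ = p − ek + Σᵢ ξᵢθᵢ ≠ 0`. For small `λ > 0` the potential wall
`W(e^L ch, e^L ch')` meets each vertical line `λ = const` in a unique point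
`(λ, Q(λ))`, and `2λ²Q(λ) → A`; if `A = 0` then `2λQ(λ) → B`; if `A = B = 0`
then `Q(λ)` stays bounded as `λ → 0⁺`. -/
theorem potential_wall_asymptotics_dim_two_caseB
    {ι : Type*} [Fintype ι] {N : Type*} [AddCommGroup N] [Module ℝ N]
    (B : N →ₗ[ℝ] N →ₗ[ℝ] ℝ) (hsymm : ∀ D D' : N, B D D' = B D' D)
    (e m : ℝ) (Θ f : N) (Θi : ι → N)
    (hΘΘ : B Θ Θ = -e) (hΘiΘi : ∀ i, B (Θi i) (Θi i) = -e)
    (hff : B f f = 0) (hΘf : B Θ f = 1) (hΘif : ∀ i, B (Θi i) f = 1)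
    (θ : ι → ℝ) (hθ : ∀ i, θ i = B Θ (Θi i))
    (Hl : ℝ → N) (hHl : ∀ l : ℝ, Hl l = l • (Θ + m • f) + (1 - l) • f)
    (g : ℝ → ℝ) (hg : ∀ l : ℝ, g l = B (Hl l) (Hl l))
    (x z r k p χ aL bL : ℝ) (ξ η : ι → ℝ)
    (hx : x ≠ 0) (hBog : x * z ≤ 0)
    (hk : k + ∑ i, ξ i = 0)
    (ρ : ℝ) (hρ : ρ = p - e * k + ∑ i, ξ i * θ i) (hρne : ρ ≠ 0)
    (Δi : ι → N) (hΔi : ∀ i, Δi i = Θi i - Θ - (θ i + e) • f)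
    (ΔL Δ' : N) (hΔL : ΔL = ∑ i, η i • Δi i) (hΔ' : Δ' = ∑ i, ξ i • Δi i)
    (L ch'1 : N)
    (hL : L = aL • Θ + bL • f + ∑ i, η i • Θi i)
    (hch'1 : ch'1 = k • Θ + p • f + ∑ i, ξ i • Θi i)
    (A Bc : ℝ)
    (hA : A = -((x * χ - r * z) / x + B Δ' ΔL
        + (aL + ∑ i, η i) * (p - e / 2 * k + ∑ i, ξ i * (θ i + e / 2)))
        * (aL + ∑ i, η i) / ρ)
    (hBc : Bc = z / x + B ΔL ΔL / 2
        - (bL - e * aL + e / 2 * (aL + ∑ i, η i) + ∑ i, η i * θ i)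
          * ((x * χ - r * z) / x + B Δ' ΔL) / ρ)
    (onWall : ℝ → ℝ → Prop)
    (honWall : ∀ l q : ℝ, onWall l q ↔
      (-(z + B L (0 : N) + x / 2 * B L L) + x * g l * q)
          * B (ch'1 + r • L) (Hl l)
        = (-(χ + B L ch'1 + r / 2 * B L L) + r * g l * q)
          * B ((0 : N) + x • L) (Hl l)) :
    ∃ l₀ ∈ Ioo (0 : ℝ) 1, ∃ Q : ℝ → ℝ,
      (∀ l ∈ Ioo (0 : ℝ) l₀, onWall l (Q l) ∧ ∀ q : ℝ, onWall l q → q = Q l) ∧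
      Tendsto (fun l => 2 * l ^ 2 * Q l) (nhdsWithin 0 (Ioo (0 : ℝ) l₀))
        (nhds A) ∧
      (A = 0 →
        Tendsto (fun l => 2 * l * Q l) (nhdsWithin 0 (Ioo (0 : ℝ) l₀))
          (nhds Bc)) ∧
      (A = 0 → Bc = 0 → ∃ M : ℝ, ∀ l ∈ Ioo (0 : ℝ) l₀, |Q l| ≤ M) := by
  have hS : IsSectionFamily B e Θ f Θi θ := ⟨⟨hsymm⟩, hΘΘ, hff, hΘf, hΘif, hθ⟩
  have hwall (l q : ℝ) : onWall l q ↔ OnPotentialWall B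
      (polarizationRay (Θ + (e / 2) • f) f (m - e / 2 - 1) l) q
      (ChernCharacter.twist B L ⟨x, 0, z⟩) (ChernCharacter.twist B L ⟨r, ch'1, χ⟩) := by
    rw [honWall, hg, hHl, polarizationRay_add_half_smul]
    rfl
  obtain rfl : Δi = fun i => Θi i - Θ - (θ i + e) • f := funext hΔi
  subst hL hch'1 hΔL hΔ' hρ
  have hA' := hA.trans (hS.wallLeadingCoeff_combination hk aL bL r p χ η ⟨x, 0, z⟩).symm
  have hBc' := hBc.trans (hS.wallSubleadingCoeff_combination hk aL bL r p χ η ⟨x, 0, z⟩).symm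
  simp only [hwall, hA', hBc']
  exact potential_wall_asymptotics_dim_two_caseB_general hS.isSymm hS.isHyperbolicPair _ _ hx rfl
    (hk ▸ hS.combination_fibre k p ξ)
    (hS.combination_add_half_smul_of_add_sum_eq_zero hk p ▸ hρne)
end

section
/- (Potential walls for one-dimensional objects, case A.) Assume k + Σ_i ξ_i = 0 and ρ := p − ek + Σ_i ξ_i θ_i > 0 (so that ch₁·H_λ = ρλ > 0 for all 0 < λ < 1). Define A := −( z + Δ·Δ_L + (a_L + Σ_i η_i)(p − (e/2)k + Σ_i ξ_i(θ_i + e/2)) )·(a_L + Σ_i η_i)/ρ and B := χ/r + (Δ_L·Δ_L)/2 − ( b_L − e·a_L + (e/2)(a_L + Σ_i η_i) + Σ_i η_i θ_i )·( z + Δ·Δ_L )/ρ. Then there exists λ₀ ∈ (0,1) such that for each λ ∈ (0,λ₀) there is a unique real number Q(λ) with (λ, Q(λ)) on the potential wall W(e^L ch, e^L ch'); moreover 2λ²·Q(λ) → A as λ → 0⁺; if A = 0 then 2λ·Q(λ) → B as λ → 0⁺; and if A = B = 0 then Q(λ) remains bounded as λ → 0⁺. -/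
open Set Filter

/-!
Only the pairings of `L` and `ch₁` with `Θ` and `f`, and of their projections to `⟨Θ, f⟩^⊥`, enter
the wall equation. If `ch₁·f = 0` it is linear in `q`, and with `g(λ) = 2λ(1 + (m − e/2 − 1)λ)`
its solution is exactly `Q(λ) = A / (2λ²) + B / g(λ)`: a factor `1 + (m − e/2 − 1)λ` cancels in
the first term. All three asymptotic statements are read off from this formula.
-/

open scoped Topology

section WallHeight

/-- The solution `Q(l)` of the wall equation, as a function of the two coefficients `A`, `b` and of
the constant `c` in `H_l · H_l = 2l(1 + cl)`. It has junk values where `l = 0` or `1 + cl = 0`. -/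
noncomputable def wallHeight (A b c l : ℝ) : ℝ :=
  A / (2 * l ^ 2) + b / (2 * l * (1 + c * l))

variable (A b c : ℝ)

theorem tendsto_one_add_mul_nhdsNE_zero : Tendsto (fun l : ℝ => 1 + c * l) (𝓝[≠] 0) (𝓝 1) := by
  have hcont : Continuous fun l : ℝ => 1 + c * l := by fun_prop
  simpa using (hcont.tendsto 0).mono_left nhdsWithin_le_nhds

theorem tendsto_div_one_add_mul_nhdsNE_zero :
    Tendsto (fun l : ℝ => b / (1 + c * l)) (𝓝[≠] 0) (𝓝 b) := by
  simpa [div_eq_mul_inv] using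
    ((tendsto_one_add_mul_nhdsNE_zero c).inv₀ one_ne_zero).const_mul b

theorem two_mul_mul_wallHeight_zero {l : ℝ} (hl : l ≠ 0) :
    2 * l * wallHeight 0 b c l = b / (1 + c * l) := by
  rw [wallHeight, zero_div, zero_add, mul_div_assoc', mul_div_mul_left _ _ (by positivity)]

theorem two_mul_sq_mul_wallHeight {l : ℝ} (hl : l ≠ 0) :
    2 * l ^ 2 * wallHeight A b c l = A + l * (b / (1 + c * l)) := by
  rw [← two_mul_mul_wallHeight_zero b c hl, wallHeight, wallHeight]
  field_simp
  ring

theorem eq_wallHeight_iff {l : ℝ} (hl : l ≠ 0) (hc : 1 + c * l ≠ 0) (q : ℝ) :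
    q = wallHeight A b c l ↔ 2 * l ^ 2 * (1 + c * l) * q = A * (1 + c * l) + b * l := by
  have hscaled : 2 * l ^ 2 * (1 + c * l) * wallHeight A b c l = A * (1 + c * l) + b * l := by
    rw [mul_right_comm, two_mul_sq_mul_wallHeight A b c hl, add_mul, mul_assoc,
      div_mul_cancel₀ b hc, mul_comm l b]
  rw [← hscaled, mul_right_inj' (by positivity)]

theorem tendsto_two_mul_sq_mul_wallHeight :
    Tendsto (fun l => 2 * l ^ 2 * wallHeight A b c l) (𝓝[≠] 0) (𝓝 A) := by
  have hid : Tendsto (fun l : ℝ => l) (𝓝[≠] 0) (𝓝 0) := nhdsWithin_le_nhds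
  have hlim := (hid.mul (tendsto_div_one_add_mul_nhdsNE_zero b c)).const_add A
  rw [zero_mul, add_zero] at hlim
  refine hlim.congr' ?_
  filter_upwards [self_mem_nhdsWithin] with l hl
  exact (two_mul_sq_mul_wallHeight A b c hl).symm

theorem tendsto_two_mul_mul_wallHeight_zero :
    Tendsto (fun l => 2 * l * wallHeight 0 b c l) (𝓝[≠] 0) (𝓝 b) := by
  refine (tendsto_div_one_add_mul_nhdsNE_zero b c).congr' ?_
  filter_upwards [self_mem_nhdsWithin] with l hl
  exact (two_mul_mul_wallHeight_zero b c hl).symm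

theorem wallHeight_zero_zero (l : ℝ) : wallHeight 0 0 c l = 0 := by
  simp [wallHeight]

theorem exists_forall_mem_Ioo_one_add_mul_ne_zero :
    ∃ l₀ ∈ Ioo (0 : ℝ) 1, ∀ l ∈ Ioo (0 : ℝ) l₀, 1 + c * l ≠ 0 := by
  have hne : ∀ᶠ l in 𝓝[>] (0 : ℝ), 1 + c * l ≠ 0 :=
    ((tendsto_one_add_mul_nhdsNE_zero c).eventually_ne one_ne_zero).filter_mono
      (nhdsGT_le_nhdsNE 0)
  obtain ⟨l₀, hl₀, hsub⟩ :=
    (mem_nhdsGT_iff_exists_mem_Ioc_Ioo_subset (u' := (1 / 2 : ℝ)) (by norm_num)).1 hne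
  exact ⟨l₀, ⟨hl₀.1, hl₀.2.trans_lt (by norm_num)⟩, hsub⟩

variable {A b c}

theorem exists_unique_solution_asymptotics_of_iff_eq_wallHeight {P : ℝ → ℝ → Prop}
    (hP : ∀ l q, l ≠ 0 → 1 + c * l ≠ 0 → (P l q ↔ q = wallHeight A b c l)) :
    ∃ l₀ ∈ Ioo (0 : ℝ) 1, ∃ Q : ℝ → ℝ,
      (∀ l ∈ Ioo (0 : ℝ) l₀, P l (Q l) ∧ ∀ q : ℝ, P l q → q = Q l) ∧
      Tendsto (fun l => 2 * l ^ 2 * Q l) (𝓝[Ioo (0 : ℝ) l₀] 0) (𝓝 A) ∧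
      (A = 0 → Tendsto (fun l => 2 * l * Q l) (𝓝[Ioo (0 : ℝ) l₀] 0) (𝓝 b)) ∧
      (A = 0 → b = 0 → ∃ M : ℝ, ∀ l ∈ Ioo (0 : ℝ) l₀, |Q l| ≤ M) := by
  obtain ⟨l₀, hl₀, hne⟩ := exists_forall_mem_Ioo_one_add_mul_ne_zero c
  have hle : 𝓝[Ioo (0 : ℝ) l₀] 0 ≤ 𝓝[≠] 0 := nhdsWithin_mono 0 fun l hl => hl.1.ne'
  refine ⟨l₀, hl₀, wallHeight A b c, fun l hl => ?_,
    (tendsto_two_mul_sq_mul_wallHeight A b c).mono_left hle, ?_, ?_⟩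
  · have hiff := fun q => hP l q hl.1.ne' (hne l hl)
    exact ⟨(hiff _).2 rfl, fun q => (hiff q).1⟩
  · rintro rfl
    exact (tendsto_two_mul_mul_wallHeight_zero b c).mono_left hle
  · rintro rfl rfl
    exact ⟨0, fun l _ => by rw [wallHeight_zero_zero, abs_zero]⟩

end WallHeight

section SectionFiberPair

variable {N : Type*} [AddCommGroup N] [Module ℝ N]

/-- `Θ` and `f` have the intersection numbers of a section of self-intersection `-e` and a fibre of
an elliptic surface, with respect to the symmetric form `B`. -/
structure IsSectionFiberPair (B : N →ₗ[ℝ] N →ₗ[ℝ] ℝ) (e : ℝ) (Θ f : N) : Prop where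
  symm : ∀ D D', B D D' = B D' D
  section_section : B Θ Θ = -e
  fiber_fiber : B f f = 0
  section_fiber : B Θ f = 1

/-- The polarization `H_l = l(Θ + mf) + (1 - l)f`. -/
def polarization (Θ f : N) (m l : ℝ) : N :=
  l • (Θ + m • f) + (1 - l) • f

/-- The orthogonal projection to `⟨Θ, f⟩^⊥` when `IsSectionFiberPair B e Θ f` holds. It maps
`Θ_i` to `Δ_i`. -/
def orthProj (B : N →ₗ[ℝ] N →ₗ[ℝ] ℝ) (e : ℝ) (Θ f : N) : N →ₗ[ℝ] N :=
  LinearMap.id - (B.flip f).smulRight Θ - (B.flip Θ + e • B.flip f).smulRight f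

/-- The coefficient `A` of the potential wall `W(e^L ch, e^L ch')` for `ch = (0, D, z)`, in terms
of intersection numbers only. -/
noncomputable def wallCoeffA (B : N →ₗ[ℝ] N →ₗ[ℝ] ℝ) (Θ f : N) (z : ℝ) (D L : N) : ℝ :=
  -(z + B L D) * B L f / B D Θ

/-- The coefficient `B` of the potential wall `W(e^L ch, e^L ch')` for `ch = (0, D, z)` and
`ch' = (r, 0, χ)`, in terms of intersection numbers only. -/
noncomputable def wallCoeffB (B : N →ₗ[ℝ] N →ₗ[ℝ] ℝ) (e : ℝ) (Θ f : N) (z r χ : ℝ)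
    (D L : N) : ℝ :=
  χ / r + B (orthProj B e Θ f L) (orthProj B e Θ f L) / 2
    - (B L Θ + e / 2 * B L f) * (z + B (orthProj B e Θ f D) (orthProj B e Θ f L)) / B D Θ

theorem apply_polarization (B : N →ₗ[ℝ] N →ₗ[ℝ] ℝ) (Θ f : N) (m l : ℝ) (D : N) :
    B D (polarization Θ f m l) = l * B D Θ + (1 + (m - 1) * l) * B D f := by
  simp only [polarization, map_add, map_smul, smul_eq_mul]
  ring

theorem orthProj_apply (B : N →ₗ[ℝ] N →ₗ[ℝ] ℝ) (e : ℝ) (Θ f D : N) :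
    orthProj B e Θ f D = D - B D f • Θ - (B D Θ + e * B D f) • f := by
  simp [orthProj]

namespace IsSectionFiberPair

variable {B : N →ₗ[ℝ] N →ₗ[ℝ] ℝ} {e : ℝ} {Θ f : N}

theorem fiber_section (h : IsSectionFiberPair B e Θ f) : B f Θ = 1 :=
  (h.symm f Θ).trans h.section_fiber

theorem polarization_polarization (h : IsSectionFiberPair B e Θ f) (m l : ℝ) :
    B (polarization Θ f m l) (polarization Θ f m l) = 2 * l * (1 + (m - e / 2 - 1) * l) := by
  rw [apply_polarization, h.symm _ Θ, h.symm _ f, apply_polarization, apply_polarization,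
    h.section_section, h.section_fiber, h.fiber_section, h.fiber_fiber]
  ring

theorem orthProj_section (h : IsSectionFiberPair B e Θ f) : orthProj B e Θ f Θ = 0 := by
  rw [orthProj_apply, h.section_fiber, h.section_section]
  module

theorem orthProj_fiber (h : IsSectionFiberPair B e Θ f) : orthProj B e Θ f f = 0 := by
  rw [orthProj_apply, h.fiber_fiber, h.fiber_section]
  module

theorem apply_orthProj_orthProj (h : IsSectionFiberPair B e Θ f) (D D' : N) :
    B (orthProj B e Θ f D) (orthProj B e Θ f D')
      = B D D' - B D f * B D' Θ - B D Θ * B D' f - e * B D f * B D' f := by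
  simp only [orthProj_apply, map_sub, map_smul, LinearMap.sub_apply, LinearMap.smul_apply,
    smul_eq_mul, h.symm Θ D', h.symm f D', h.section_section, h.section_fiber, h.fiber_section,
    h.fiber_fiber]
  ring

section Combination

variable {ι : Type*} [Fintype ι] (a b : ℝ) (c : ι → ℝ) {S : ι → N}

theorem combination_apply_fiber (h : IsSectionFiberPair B e Θ f) (hS : ∀ i, B (S i) f = 1) :
    B (a • Θ + b • f + ∑ i, c i • S i) f = a + ∑ i, c i := by
  simp [hS, h.section_fiber, h.fiber_fiber]

theorem combination_apply_section (h : IsSectionFiberPair B e Θ f) :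
    B (a • Θ + b • f + ∑ i, c i • S i) Θ = b - e * a + ∑ i, c i * B Θ (S i) := by
  simp only [map_add, map_smul, map_sum, LinearMap.add_apply, LinearMap.smul_apply,
    LinearMap.sum_apply, smul_eq_mul, h.section_section, h.fiber_section, h.symm _ Θ]
  ring

theorem orthProj_combination (h : IsSectionFiberPair B e Θ f) (hS : ∀ i, B (S i) f = 1) :
    orthProj B e Θ f (a • Θ + b • f + ∑ i, c i • S i)
      = ∑ i, c i • (S i - Θ - (B Θ (S i) + e) • f) := by
  have hproj (i : ι) : orthProj B e Θ f (S i) = S i - Θ - (B Θ (S i) + e) • f := by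
    rw [orthProj_apply, hS, h.symm (S i), one_smul, mul_one]
  simp only [map_add, map_smul, map_sum, h.orthProj_section, h.orthProj_fiber, hproj, smul_zero,
    zero_add]

end Combination

theorem wall_equation_iff (h : IsSectionFiberPair B e Θ f) {D : N} (hDf : B D f = 0)
    (hDΘ : B D Θ ≠ 0) (L : N) {r : ℝ} (hr : r ≠ 0) (z χ m : ℝ) {l : ℝ} (hl : l ≠ 0)
    (hg : 1 + (m - e / 2 - 1) * l ≠ 0) (q : ℝ) :
    -(z + B L D) * (r * B L (polarization Θ f m l))
        = (-(χ + r / 2 * B L L)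
            + r * B (polarization Θ f m l) (polarization Θ f m l) * q)
          * B D (polarization Θ f m l) ↔
      q = wallHeight (wallCoeffA B Θ f z D L) (wallCoeffB B e Θ f z r χ D L) (m - e / 2 - 1) l := by
  rw [h.polarization_polarization, apply_polarization, apply_polarization, hDf]
  have hscaled :
      (-(χ + r / 2 * B L L) + r * (2 * l * (1 + (m - e / 2 - 1) * l)) * q)
            * (l * B D Θ + (1 + (m - 1) * l) * 0)
          - -(z + B L D) * (r * (l * B L Θ + (1 + (m - 1) * l) * B L f))
        = r * B D Θ * (2 * l ^ 2 * (1 + (m - e / 2 - 1) * l) * q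
          - (wallCoeffA B Θ f z D L * (1 + (m - e / 2 - 1) * l)
            + wallCoeffB B e Θ f z r χ D L * l)) := by
    rw [wallCoeffA, wallCoeffB, h.apply_orthProj_orthProj, h.apply_orthProj_orthProj, hDf,
      h.symm D L]
    field_simp
    ring
  rw [eq_wallHeight_iff _ _ _ hl hg, eq_comm, ← sub_eq_zero, hscaled, mul_eq_zero,
    or_iff_right (mul_ne_zero hr hDΘ), sub_eq_zero]

end IsSectionFiberPair

end SectionFiberPair

theorem potential_wall_asymptotics_dim_one_caseA_general
    {ι : Type*} [Fintype ι] {N : Type*} [AddCommGroup N] [Module ℝ N]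
    (B : N →ₗ[ℝ] N →ₗ[ℝ] ℝ) (hsymm : ∀ D D' : N, B D D' = B D' D)
    (e m : ℝ) (Θ f : N) (Θi : ι → N)
    (hΘΘ : B Θ Θ = -e)
    (hff : B f f = 0) (hΘf : B Θ f = 1) (hΘif : ∀ i, B (Θi i) f = 1)
    (θ : ι → ℝ) (hθ : ∀ i, θ i = B Θ (Θi i))
    (Hl : ℝ → N) (hHl : ∀ l : ℝ, Hl l = l • (Θ + m • f) + (1 - l) • f)
    (g : ℝ → ℝ) (hg : ∀ l : ℝ, g l = B (Hl l) (Hl l))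
    (z r k p χ aL bL : ℝ) (ξ η : ι → ℝ)
    (hr : r ≠ 0)
    (hk : k + ∑ i, ξ i = 0)
    (ρ : ℝ) (hρ : ρ = p - e * k + ∑ i, ξ i * θ i) (hρne : ρ ≠ 0)
    (Δi : ι → N) (hΔi : ∀ i, Δi i = Θi i - Θ - (θ i + e) • f)
    (ΔL Δ : N) (hΔL : ΔL = ∑ i, η i • Δi i) (hΔ : Δ = ∑ i, ξ i • Δi i)
    (L ch1 : N)
    (hL : L = aL • Θ + bL • f + ∑ i, η i • Θi i)
    (hch1 : ch1 = k • Θ + p • f + ∑ i, ξ i • Θi i)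
    (A Bc : ℝ)
    (hA : A = -(z + B Δ ΔL
        + (aL + ∑ i, η i) * (p - e / 2 * k + ∑ i, ξ i * (θ i + e / 2)))
        * (aL + ∑ i, η i) / ρ)
    (hBc : Bc = χ / r + B ΔL ΔL / 2
        - (bL - e * aL + e / 2 * (aL + ∑ i, η i) + ∑ i, η i * θ i)
          * (z + B Δ ΔL) / ρ)
    (onWall : ℝ → ℝ → Prop)
    (honWall : ∀ l q : ℝ, onWall l q ↔
      (-(z + B L ch1) + 0 * g l * q) * B ((0 : N) + r • L) (Hl l)
        = (-(χ + B L (0 : N) + r / 2 * B L L) + r * g l * q)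
          * B ch1 (Hl l)) :
    (∀ l : ℝ, B ch1 (Hl l) = ρ * l) ∧
    ∀ l q : ℝ, l ≠ 0 → 1 + (m - e / 2 - 1) * l ≠ 0 →
      (onWall l q ↔ q = wallHeight A Bc (m - e / 2 - 1) l) := by
  have h : IsSectionFiberPair B e Θ f := ⟨hsymm, hΘΘ, hff, hΘf⟩
  obtain rfl : θ = fun i => B Θ (Θi i) := funext hθ
  obtain rfl : Δi = fun i => Θi i - Θ - (B Θ (Θi i) + e) • f := funext hΔi
  obtain rfl : Hl = polarization Θ f m := funext hHl
  have hLf : B L f = aL + ∑ i, η i := by rw [hL, h.combination_apply_fiber _ _ _ hΘif]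
  have hLΘ : B L Θ = bL - e * aL + ∑ i, η i * B Θ (Θi i) := by
    rw [hL, h.combination_apply_section]
  have hLproj : orthProj B e Θ f L = ΔL := by rw [hL, h.orthProj_combination _ _ _ hΘif, hΔL]
  have hcf : B ch1 f = 0 := by rw [hch1, h.combination_apply_fiber _ _ _ hΘif, hk]
  have hcΘ : B ch1 Θ = ρ := by rw [hch1, h.combination_apply_section, hρ]
  have hcproj : orthProj B e Θ f ch1 = Δ := by rw [hch1, h.orthProj_combination _ _ _ hΘif, hΔ]
  have hpair : B Δ ΔL = B L ch1 - ρ * B L f := by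
    rw [← hcproj, ← hLproj, h.apply_orthProj_orthProj, hcf, hcΘ, hsymm ch1]
    ring
  have hbracket : p - e / 2 * k + ∑ i, ξ i * (B Θ (Θi i) + e / 2) = ρ := by
    simp only [mul_add, Finset.sum_add_distrib, ← Finset.sum_mul]
    linear_combination e / 2 * hk - hρ
  have hA' : A = wallCoeffA B Θ f z ch1 L := by
    rw [hA, hbracket, hpair, wallCoeffA, hcΘ, hLf]
    ring
  have hBc' : Bc = wallCoeffB B e Θ f z r χ ch1 L := by
    rw [hBc, wallCoeffB, hLproj, hcproj, hcΘ, hLf, hLΘ]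
    ring
  refine ⟨fun l => by rw [apply_polarization, hcf, hcΘ]; ring, fun l q hl hgl => ?_⟩
  rw [hA', hBc', ← h.wall_equation_iff hcf (hcΘ.trans_ne hρne) L hr z χ m hl hgl, honWall, hg]
  simp only [map_zero, zero_add, add_zero, zero_mul, map_smul, LinearMap.smul_apply, smul_eq_mul]

/-- Potential walls in the `(λ,0,0,q)`-plane for one-dimensional objects,
case (A): `ch = (0, kΘ + pf + Σᵢ ξᵢΘᵢ, z)` with `k + Σᵢ ξᵢ = 0` and
`ρ = p − ek + Σᵢ ξᵢθᵢ > 0` (so `ch₁·H_λ = ρλ > 0` for all `0 < λ < 1`),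
`ch' = (r, 0, χ)` with `r ≠ 0`. For small `λ > 0` the potential wall
`W(e^L ch, e^L ch')` meets each vertical line in a unique point `(λ, Q(λ))`,
and `2λ²Q(λ) → A`; if `A = 0` then `2λQ(λ) → B`; if `A = B = 0` then `Q(λ)`
stays bounded as `λ → 0⁺`. -/
theorem potential_wall_asymptotics_dim_one_caseA
    {ι : Type*} [Fintype ι] {N : Type*} [AddCommGroup N] [Module ℝ N]
    (B : N →ₗ[ℝ] N →ₗ[ℝ] ℝ) (hsymm : ∀ D D' : N, B D D' = B D' D)
    (e m : ℝ) (Θ f : N) (Θi : ι → N)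
    (hΘΘ : B Θ Θ = -e) (hΘiΘi : ∀ i, B (Θi i) (Θi i) = -e)
    (hff : B f f = 0) (hΘf : B Θ f = 1) (hΘif : ∀ i, B (Θi i) f = 1)
    (θ : ι → ℝ) (hθ : ∀ i, θ i = B Θ (Θi i))
    (Hl : ℝ → N) (hHl : ∀ l : ℝ, Hl l = l • (Θ + m • f) + (1 - l) • f)
    (g : ℝ → ℝ) (hg : ∀ l : ℝ, g l = B (Hl l) (Hl l))
    (z r k p χ aL bL : ℝ) (ξ η : ι → ℝ)
    (hr : r ≠ 0)
    (hk : k + ∑ i, ξ i = 0)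
    (ρ : ℝ) (hρ : ρ = p - e * k + ∑ i, ξ i * θ i) (hρpos : 0 < ρ)
    (Δi : ι → N) (hΔi : ∀ i, Δi i = Θi i - Θ - (θ i + e) • f)
    (ΔL Δ : N) (hΔL : ΔL = ∑ i, η i • Δi i) (hΔ : Δ = ∑ i, ξ i • Δi i)
    (L ch1 : N)
    (hL : L = aL • Θ + bL • f + ∑ i, η i • Θi i)
    (hch1 : ch1 = k • Θ + p • f + ∑ i, ξ i • Θi i)
    (A Bc : ℝ)
    (hA : A = -(z + B Δ ΔL
        + (aL + ∑ i, η i) * (p - e / 2 * k + ∑ i, ξ i * (θ i + e / 2)))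
        * (aL + ∑ i, η i) / ρ)
    (hBc : Bc = χ / r + B ΔL ΔL / 2
        - (bL - e * aL + e / 2 * (aL + ∑ i, η i) + ∑ i, η i * θ i)
          * (z + B Δ ΔL) / ρ)
    (onWall : ℝ → ℝ → Prop)
    (honWall : ∀ l q : ℝ, onWall l q ↔
      (-(z + B L ch1) + 0 * g l * q) * B ((0 : N) + r • L) (Hl l)
        = (-(χ + B L (0 : N) + r / 2 * B L L) + r * g l * q)
          * B ch1 (Hl l)) :
    (∀ l : ℝ, 0 < l → l < 1 → B ch1 (Hl l) = ρ * l ∧ 0 < ρ * l) ∧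
    ∃ l₀ ∈ Ioo (0 : ℝ) 1, ∃ Q : ℝ → ℝ,
      (∀ l ∈ Ioo (0 : ℝ) l₀, onWall l (Q l) ∧ ∀ q : ℝ, onWall l q → q = Q l) ∧
      Tendsto (fun l => 2 * l ^ 2 * Q l) (nhdsWithin 0 (Ioo (0 : ℝ) l₀))
        (nhds A) ∧
      (A = 0 →
        Tendsto (fun l => 2 * l * Q l) (nhdsWithin 0 (Ioo (0 : ℝ) l₀))
          (nhds Bc)) ∧
      (A = 0 → Bc = 0 → ∃ M : ℝ, ∀ l ∈ Ioo (0 : ℝ) l₀, |Q l| ≤ M) := by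
  obtain ⟨hIm, hwall⟩ := potential_wall_asymptotics_dim_one_caseA_general B hsymm e m Θ f Θi hΘΘ
    hff hΘf hΘif θ hθ Hl hHl g hg z r k p χ aL bL ξ η hr hk ρ hρ hρpos.ne' Δi hΔi ΔL Δ hΔL hΔ L ch1
    hL hch1 A Bc hA hBc onWall honWall
  exact ⟨fun l hl _ => ⟨hIm l, mul_pos hρpos hl⟩,
    exists_unique_solution_asymptotics_of_iff_eq_wallHeight hwall⟩
end

section
/- Let e > 0 and m be real numbers and let a_L > 1 be an integer. Consider the Chern characters ch^a := (1, a_L·Θ, −(e/2)a_L²) and ch^b := (1, (a_L−1)·Θ, −(e/2)(a_L−1)²) (those of the line bundles O_X(a_LΘ) and O_X((a_L−1)Θ)). Then there exists λ₀ ∈ (0,1) such that for every λ ∈ (0,λ₀) there is a unique real number Q(λ) with (λ, Q(λ)) on the potential wall W(ch^a, ch^b), and 2λ·Q(λ) → (e/2)·a_L·(a_L−1) as λ → 0⁺; i.e. the wall is asymptotic to q = e·a_L(a_L−1)/(4λ) as λ → 0⁺. -/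
open Set Filter

/-!
For `x ≠ y` and `D · H ≠ 0`, the wall equation of `O(xD)` and `O(yD)` has the common factor
`(x - y) (D · H)`, and what remains is `H² q = -(D²/2) x y`. Along the segment from an isotropic
class `f` to `A` one has `H_l² / (2l) → A · f` as `l → 0⁺`, so `2 l q → -(D²/2) x y / (A · f)`.
The theorem is the case `D = Θ`, `A = Θ + m f`, `x = a_L`, `y = a_L - 1`.
-/

open Topology AffineMap

section CentralCharge

variable {N : Type*} [AddCommGroup N] [Module ℝ N]

/-- The Chern character `(1, D, D²/2)` of the line bundle `O(D)`, as a triple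
`(ch₀, ch₁, ch₂)`. -/
noncomputable def lineBundleCh (B : LinearMap.BilinForm ℝ N) (D : N) : ℝ × N × ℝ :=
  (1, D, B D D / 2)

/-- The central charge `Z(ch) = (-ch₂ + ch₀ H² q) + i (ch₁ · H)`, at vanishing B-field, of the
polarization `H` and the parameter `q`. -/
def centralCharge (B : LinearMap.BilinForm ℝ N) (H : N) (q : ℝ) (ch : ℝ × N × ℝ) : ℂ :=
  ⟨-ch.2.2 + ch.1 * B H H * q, B ch.2.1 H⟩

/-- The potential wall of two Chern characters: the pairs `(H, q)` at which their central charges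
are linearly dependent over `ℝ`. -/
def potentialWall (B : LinearMap.BilinForm ℝ N) (ch ch' : ℝ × N × ℝ) : Set (N × ℝ) :=
  {p | (centralCharge B p.1 p.2 ch).re * (centralCharge B p.1 p.2 ch').im =
    (centralCharge B p.1 p.2 ch').re * (centralCharge B p.1 p.2 ch).im}

variable {B : LinearMap.BilinForm ℝ N} {D H : N} {x y : ℝ}

theorem mem_potentialWall_lineBundleCh_smul (q : ℝ) :
    (H, q) ∈ potentialWall B (lineBundleCh B (x • D)) (lineBundleCh B (y • D)) ↔
      (-(B D D / 2 * x ^ 2) + B H H * q) * B (y • D) H =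
        (-(B D D / 2 * y ^ 2) + B H H * q) * B (x • D) H := by
  have ch₂_smul (z : ℝ) : B (z • D) (z • D) / 2 = B D D / 2 * z ^ 2 := by
    simp only [map_smul, LinearMap.smul_apply, smul_eq_mul]
    ring
  simp only [potentialWall, centralCharge, lineBundleCh, mem_ofPred_eq, ch₂_smul, one_mul]

theorem mem_potentialWall_lineBundleCh_smul_iff_eq_div (hxy : x ≠ y) (hDH : B D H ≠ 0)
    (hH : B H H ≠ 0) (q : ℝ) :
    (H, q) ∈ potentialWall B (lineBundleCh B (x • D)) (lineBundleCh B (y • D)) ↔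
      q = -(B D D / 2) * x * y / B H H := by
  have common_factor : (x - y) * B D H ≠ 0 := mul_ne_zero (sub_ne_zero.mpr hxy) hDH
  rw [mem_potentialWall_lineBundleCh_smul, eq_div_iff hH,
    ← mul_right_inj' (b := q * B H H) common_factor]
  simp only [map_smul, LinearMap.smul_apply, smul_eq_mul]
  constructor <;> intro h <;> linear_combination -h

end CentralCharge

section IsotropicLimit

variable {N : Type*} [AddCommGroup N] [Module ℝ N] {B : LinearMap.BilinForm ℝ N} {A D f : N}

theorem apply_lineMap_self_of_isotropic (hB : B.IsSymm) (hf : B f f = 0) (l : ℝ) :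
    B (lineMap f A l) (lineMap f A l) = 2 * l * lineMap (B A f) (B A A / 2) l := by
  simp only [lineMap_apply_module, map_add, map_smul, LinearMap.add_apply, LinearMap.smul_apply,
    smul_eq_mul, hf, hB.eq f A]
  ring

theorem tendsto_apply_lineMap_self_div (hB : B.IsSymm) (hf : B f f = 0) :
    Tendsto (fun l : ℝ => B (lineMap f A l) (lineMap f A l) / (2 * l)) (𝓝[>] 0) (𝓝 (B A f)) := by
  have hlim : Tendsto (lineMap (k := ℝ) (B A f) (B A A / 2)) (𝓝[>] 0) (𝓝 (B A f)) :=
    (lineMap_continuous.tendsto' 0 _ (lineMap_apply_zero _ _)).mono_left nhdsWithin_le_nhds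
  refine hlim.congr' ?_
  filter_upwards [self_mem_nhdsWithin] with l (hl : 0 < l)
  rw [apply_lineMap_self_of_isotropic hB hf, mul_div_cancel_left₀ _ (by positivity)]

theorem eventually_apply_lineMap_ne_zero (hDf : B D f ≠ 0) :
    ∀ᶠ l : ℝ in 𝓝[>] 0, B D (lineMap f A l) ≠ 0 := by
  have hlim : Tendsto (fun l : ℝ => B D (lineMap f A l)) (𝓝 0) (𝓝 (B D f)) := by
    have apply_lineMap (l : ℝ) : B D (lineMap f A l) = lineMap (B D f) (B D A) l :=
      (B D).toAffineMap.apply_lineMap f A l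
    simp only [apply_lineMap]
    exact lineMap_continuous.tendsto' 0 _ (lineMap_apply_zero _ _)
  exact (hlim.mono_left nhdsWithin_le_nhds).eventually_ne hDf

theorem eventually_apply_lineMap_self_ne_zero (hB : B.IsSymm) (hf : B f f = 0)
    (hAf : B A f ≠ 0) :
    ∀ᶠ l : ℝ in 𝓝[>] 0, B (lineMap f A l) (lineMap f A l) ≠ 0 :=
  ((tendsto_apply_lineMap_self_div hB hf).eventually_ne hAf).mono fun _ h =>
    (div_ne_zero_iff.mp h).1

theorem line_bundle_wall_asymptotic_general (hB : B.IsSymm) (hf : B f f = 0) (hAf : B A f ≠ 0)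
    (hDf : B D f ≠ 0) {x y : ℝ} (hxy : x ≠ y) :
    ∃ l₀ ∈ Ioo (0 : ℝ) 1, ∃ Q : ℝ → ℝ,
      (∀ l ∈ Ioo (0 : ℝ) l₀, ∀ q : ℝ,
        (lineMap f A l, q) ∈ potentialWall B (lineBundleCh B (x • D)) (lineBundleCh B (y • D)) ↔
          q = Q l) ∧
      Tendsto (fun l => 2 * l * Q l) (𝓝[>] 0) (𝓝 (-(B D D / 2) * x * y / B A f)) := by
  obtain ⟨l₀, hl₀, hne⟩ := (mem_nhdsGT_iff_exists_mem_Ioc_Ioo_subset one_half_pos).mp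
    ((eventually_apply_lineMap_ne_zero (A := A) hDf).and
      (eventually_apply_lineMap_self_ne_zero hB hf hAf))
  refine ⟨l₀, ⟨hl₀.1, hl₀.2.trans_lt one_half_lt_one⟩,
    fun l => -(B D D / 2) * x * y / B (lineMap f A l) (lineMap f A l), fun l hl =>
      mem_potentialWall_lineBundleCh_smul_iff_eq_div hxy (hne hl).1 (hne hl).2, ?_⟩
  refine (tendsto_const_nhds.div (tendsto_apply_lineMap_self_div hB hf) hAf).congr fun l => ?_
  rw [Pi.div_apply, div_div_eq_mul_div, mul_comm, mul_div_assoc]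

end IsotropicLimit

/-- On a Picard-rank-two Weierstraß elliptic surface with `e > 0`, the unique
potential wall `W(ch(O_X(a_LΘ)), ch(O_X((a_L−1)Θ)))` in the `(λ,0,0,q)`-plane
(for an integer `a_L > 1`) meets each vertical line `λ = const`, for small
`λ > 0`, in a unique point `(λ, Q(λ))`, with
`2λ·Q(λ) → (e/2)a_L(a_L−1)` as `λ → 0⁺`; i.e. the wall is asymptotic to
`q = e·a_L(a_L−1)/(4λ)`. -/
theorem line_bundle_wall_asymptotic
    {N : Type*} [AddCommGroup N] [Module ℝ N]
    (B : N →ₗ[ℝ] N →ₗ[ℝ] ℝ) (hsymm : ∀ D D' : N, B D D' = B D' D)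
    (e m : ℝ) (he : 0 < e) (Θ f : N)
    (hΘΘ : B Θ Θ = -e) (hff : B f f = 0) (hΘf : B Θ f = 1)
    (aL : ℤ) (haL : 1 < aL)
    (Hl : ℝ → N) (hHl : ∀ l : ℝ, Hl l = l • (Θ + m • f) + (1 - l) • f)
    (g : ℝ → ℝ) (hg : ∀ l : ℝ, g l = B (Hl l) (Hl l))
    (onWall : ℝ → ℝ → Prop)
    (honWall : ∀ l q : ℝ, onWall l q ↔
      (-(-(e / 2) * (aL : ℝ) ^ 2) + 1 * g l * q)
          * B (((aL : ℝ) - 1) • Θ) (Hl l)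
        = (-(-(e / 2) * ((aL : ℝ) - 1) ^ 2) + 1 * g l * q)
          * B ((aL : ℝ) • Θ) (Hl l)) :
    ∃ l₀ ∈ Ioo (0 : ℝ) 1, ∃ Q : ℝ → ℝ,
      (∀ l ∈ Ioo (0 : ℝ) l₀, onWall l (Q l) ∧ ∀ q : ℝ, onWall l q → q = Q l) ∧
      Tendsto (fun l => 2 * l * Q l) (nhdsWithin 0 (Ioo (0 : ℝ) l₀))
        (nhds (e / 2 * (aL : ℝ) * ((aL : ℝ) - 1))) := by
  have hAf : B (Θ + m • f) f = 1 := by simp [hΘf, hff]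
  obtain ⟨l₀, hl₀, Q, hQ, hlim⟩ := line_bundle_wall_asymptotic_general (D := Θ) ⟨hsymm⟩ hff
    (hAf ▸ one_ne_zero) (hΘf ▸ one_ne_zero) (sub_one_lt (aL : ℝ)).ne'
  have onWall_iff (l q : ℝ) : onWall l q ↔ (lineMap f (Θ + m • f) l, q) ∈
      potentialWall B (lineBundleCh B ((aL : ℝ) • Θ)) (lineBundleCh B (((aL : ℝ) - 1) • Θ)) := by
    rw [honWall, mem_potentialWall_lineBundleCh_smul, hg, hHl, lineMap_apply_module,
      add_comm ((1 - l) • f), hΘΘ, neg_div, one_mul]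
  simp only [← onWall_iff] at hQ
  refine ⟨l₀, hl₀, Q, fun l hl => ⟨(hQ l hl _).mpr rfl, fun q => (hQ l hl q).mp⟩, ?_⟩
  rw [nhdsWithin_Ioo_eq_nhdsGT hl₀.1]
  simpa only [hΘΘ, hAf, neg_div, neg_neg, div_one] using hlim
end
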